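/- For every natural number ℓ ≥ 0, the stable rank of the C*-algebra C(𝕋^ℓ) of continuous complex-valued functions on the ℓ-torus equals ⌊ℓ/2⌋ + 1. -/

import Mathlib

/-- The left-invertible `n`-tuples `Lg_n(A)`. -/
def lgSet (A : Type*) [Ring A] (n : ℕ) : Set (Fin n → A) :=
  {x | ∃ y : Fin n → A, ∑ i, y i * x i = 1}

/-- The stable rank of a unital topological algebra: the least `n` such that
`Lg_n(A)` is dense in `A^n`, or `∞` if there is no such `n`. -/
noncomputable def stableRank (A : Type*) [Ring A] [TopologicalSpace A] : ℕ∞ :=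
  sInf {N : ℕ∞ | ∃ n : ℕ, N = n ∧ Dense (lgSet A n)}

/-!
The upper bound is a dimension count. Trigonometric polynomials are dense, so a tuple in
`C(𝕋^ℓ, ℂ)^n` may be taken smooth; for `ℓ < 2n` its range has dense complement in `ℂⁿ`, and
subtracting a small constant outside the range leaves a tuple without common zeros, which is
left invertible.

For the lower bound, `2n ≤ ℓ` provides a chart of `𝕋^ℓ` along `ℂⁿ` in which `n` complex functions
built from sines of the angles form a vector field pointing outwards on the unit sphere. This is an
open condition on the tuple, and a Brouwer type argument shows that it forces a common zero, so a
whole neighbourhood of the tuple misses `Lg_n`.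

The underlying absence of retractions of the ball onto its sphere is proved following Milnor and
Rogers. If `v` is Lipschitz and vanishes off `s`, then for small `t` the map `x ↦ x + t v x`
permutes `s`, so `∫ det (1 + t v')` over `s` is the volume of `s`. The integral is a polynomial in
`t`, hence has the same value at `t = 1`; but for a retraction `x ↦ x + v x` the determinant
vanishes identically.
-/

open Set MeasureTheory Metric Topology Module
open scoped Manifold NNReal Polynomial RealInnerProductSpace

lemma inter_frontier_nonempty_of_isPreconnected {X : Type*} [TopologicalSpace X] {s t : Set X}
    (ht : IsPreconnected t) (hs : (t ∩ s).Nonempty) (hs' : (t ∩ sᶜ).Nonempty) :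
    (t ∩ frontier s).Nonempty := by
  by_contra hempty
  have hcover : t ⊆ interior s ∪ interior sᶜ := by
    rw [← compl_frontier_eq_union_interior, subset_compl_iff_disjoint_right]
    exact disjoint_iff_inter_eq_empty.2 (not_nonempty_iff_eq_empty.1 hempty)
  have hinterior : ∀ u : Set X, t ⊆ interior u ∪ interior uᶜ → (t ∩ u).Nonempty →
      (t ∩ interior u).Nonempty := fun u hu ⟨x, hxt, hxu⟩ =>
    ⟨x, hxt, (hu hxt).resolve_right fun hx => interior_subset hx hxu⟩
  obtain ⟨x, -, hx, hx'⟩ := ht _ _ isOpen_interior isOpen_interior hcover (hinterior s hcover hs)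
    (hinterior sᶜ (by rwa [compl_compl, union_comm]) hs')
  exact interior_subset hx' (interior_subset hx)

section LipschitzPerturbation

variable {E : Type*} [NormedAddCommGroup E]

lemma bijective_id_add_of_lipschitzWith [CompleteSpace E] {v : E → E} {K : ℝ≥0} (hK : K < 1)
    (hv : LipschitzWith K v) : Function.Bijective fun x => x + v x := by
  rw [Function.bijective_iff_existsUnique]
  intro y
  have hcontr : ContractingWith K fun x => y - v x :=
    ⟨hK, by simpa using (LipschitzWith.const y).sub hv⟩
  refine ⟨hcontr.fixedPoint, ?_, fun x hx => hcontr.fixedPoint_unique ?_⟩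
  · exact eq_sub_iff_add_eq.1 hcontr.fixedPoint_isFixedPt.symm
  · exact (eq_sub_of_add_eq hx).symm

lemma lipschitzWith_indicator_of_eq_zero_on_frontier [NormedSpace ℝ E] {F : Type*}
    [NormedAddCommGroup F] {s : Set E} {f : E → F} {K : ℝ≥0}
    (hf : LipschitzOnWith K f (closure s)) (hf0 : ∀ x ∈ frontier s, f x = 0) :
    LipschitzWith K (s.indicator f) := by
  have hnorm_le : ∀ x ∈ s, ∀ y ∉ s, ‖f x‖ ≤ K * dist x y := by
    intro x hx y hy
    obtain ⟨z, hzseg, hz⟩ : (segment ℝ x y ∩ frontier s).Nonempty :=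
      inter_frontier_nonempty_of_isPreconnected (convex_segment x y).isPreconnected
        ⟨x, left_mem_segment ℝ x y, hx⟩ ⟨y, right_mem_segment ℝ x y, hy⟩
    calc ‖f x‖ = dist (f x) (f z) := by rw [hf0 z hz, dist_zero_right]
      _ ≤ K * dist x z :=
        hf.dist_le_mul x (subset_closure hx) z (frontier_subset_closure hz)
      _ ≤ K * dist x y := by
        gcongr
        linarith [dist_add_dist_of_mem_segment hzseg, dist_nonneg (x := z) (y := y)]
  refine LipschitzWith.of_dist_le_mul fun x y => ?_
  by_cases hx : x ∈ s <;> by_cases hy : y ∈ s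
  · simpa [hx, hy] using hf.dist_le_mul x (subset_closure hx) y (subset_closure hy)
  · simpa [hx, hy] using hnorm_le x hx y hy
  · simpa [hx, hy, dist_comm] using hnorm_le y hy x hx
  · simp only [indicator_of_notMem hx, indicator_of_notMem hy, dist_self]
    positivity

end LipschitzPerturbation

section Determinant

variable {E : Type*} [NormedAddCommGroup E] [NormedSpace ℝ E] [FiniteDimensional ℝ E]

lemma det_one_add_ne_zero_of_norm_lt_one {A : E →L[ℝ] E} (hA : ‖A‖ < 1) :
    (1 + A).det ≠ 0 := by
  have hunit : IsUnit (1 + A) := by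
    simpa using isUnit_one_sub_of_norm_lt_one (x := -A) (by rwa [norm_neg])
  exact ((hunit.map ContinuousLinearMap.toLinearMapRingHom).map LinearMap.det).ne_zero

lemma det_one_add_pos_of_norm_lt_one {A : E →L[ℝ] E} (hA : ‖A‖ < 1) : 0 < (1 + A).det := by
  by_contra! hneg
  have hcont : Continuous fun t : ℝ => (1 + t • A).det :=
    ContinuousLinearMap.continuous_det.comp (by fun_prop)
  obtain ⟨t, ⟨ht0, ht1⟩, ht⟩ := intermediate_value_Icc' zero_le_one hcont.continuousOn
    (show (0 : ℝ) ∈ Icc (1 + (1 : ℝ) • A).det (1 + (0 : ℝ) • A).det by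
      simpa [ContinuousLinearMap.det] using hneg)
  refine det_one_add_ne_zero_of_norm_lt_one ?_ ht
  calc ‖t • A‖ = t * ‖A‖ := by rw [norm_smul, Real.norm_of_nonneg ht0]
    _ ≤ ‖A‖ := mul_le_of_le_one_left (norm_nonneg A) ht1
    _ < 1 := hA

end Determinant

lemma exists_polynomial_eval_eq_det_one_add_smul {R M : Type*} [CommRing R] [AddCommGroup M]
    [Module R M] [Module.Free R M] [Module.Finite R M] (f : End R M) :
    ∃ p : R[X], p.natDegree ≤ finrank R M ∧ ∀ t, p.eval t = LinearMap.det (1 + t • f) := by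
  nontriviality R
  let b := Module.finBasis R M
  let B := LinearMap.toMatrix b b f
  refine ⟨(((Polynomial.X : R[X]) • B.map Polynomial.C) + (1 : Matrix _ _ R).map Polynomial.C).det,
    ?_, fun t => ?_⟩
  · simpa using Polynomial.natDegree_det_X_add_C_le B 1
  · rw [← LinearMap.det_toMatrix b, ← Polynomial.coe_evalRingHom, RingHom.map_det]
    congr 1
    ext i j
    rcases eq_or_ne i j with rfl | hij
    · simp [B, LinearMap.toMatrix_one, add_comm, mul_comm t]
    · simp [B, LinearMap.toMatrix_one, hij, mul_comm t]

lemma exists_polynomial_eval_eq_integral {α : Type*} [MeasurableSpace α] {μ : Measure α}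
    {p : α → ℝ[X]} {n : ℕ} (hdeg : ∀ x, (p x).natDegree ≤ n)
    (hintegrable : ∀ t, Integrable (fun x => (p x).eval t) μ) :
    ∃ q : ℝ[X], ∀ t, q.eval t = ∫ x, (p x).eval t ∂μ := by
  let node : ℕ → ℝ := Nat.cast
  let s := Finset.range (n + 1)
  refine ⟨Lagrange.interpolate s node fun i => ∫ x, (p x).eval (node i) ∂μ, fun t => ?_⟩
  have hp : ∀ x, (p x).eval t
      = ∑ i ∈ s, (p x).eval (node i) * (Lagrange.basis s node i).eval t := by
    intro x
    have hlt : (p x).degree < s.card := by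
      rw [Finset.card_range]
      exact Polynomial.degree_lt_iff_coeff_zero _ _ |>.2 fun i hi =>
        Polynomial.coeff_eq_zero_of_natDegree_lt ((hdeg x).trans_lt hi)
    conv_lhs => rw [Lagrange.eq_interpolate (v := node) Nat.cast_injective.injOn hlt]
    simp [Lagrange.interpolate_apply, Polynomial.eval_finsetSum]
  simp_rw [hp]
  rw [integral_finsetSum _ fun i _ => (hintegrable _).mul_const _]
  simp [Lagrange.interpolate_apply, Polynomial.eval_finsetSum, integral_mul_const]

section Jacobian

variable {E : Type*} [NormedAddCommGroup E] [NormedSpace ℝ E] [FiniteDimensional ℝ E]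
  [MeasurableSpace E] [BorelSpace E] {μ : Measure E}

lemma integrableOn_det_one_add_smul_fderiv {s : Set E} (hs : μ s ≠ ⊤) {v : E → E} {K : ℝ≥0}
    (hv : LipschitzWith K v) (t : ℝ) :
    IntegrableOn (fun x => (1 + t • fderiv ℝ v x).det) s μ := by
  have hcont : Continuous fun A : E →L[ℝ] E => (1 + t • A).det :=
    ContinuousLinearMap.continuous_det.comp (by fun_prop)
  obtain ⟨C, hC⟩ := (isCompact_closedBall (0 : E →L[ℝ] E) K).exists_bound_of_continuousOn
    hcont.continuousOn
  refine Measure.integrableOn_of_bounded hs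
    (hcont.measurable.comp (measurable_fderiv ℝ v)).aestronglyMeasurable (M := C) ?_
  exact Filter.Eventually.of_forall fun x =>
    hC _ (mem_closedBall_zero_iff.2 (norm_fderiv_le_of_lipschitz ℝ hv))

variable [μ.IsAddHaarMeasure]

lemma integral_det_one_add_fderiv_of_lipschitzWith_lt_one {s : Set E} (hs : MeasurableSet s)
    {v : E → E} {K : ℝ≥0} (hK : K < 1) (hv : LipschitzWith K v)
    (hdiff : ∀ x ∈ s, DifferentiableAt ℝ v x) (hv0 : ∀ x ∉ s, v x = 0) :
    ∫ x in s, (1 + fderiv ℝ v x).det ∂μ = μ.real s := by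
  have hbij := bijective_id_add_of_lipschitzWith hK hv
  have himage : (fun x => x + v x) '' s = s := by
    have hcompl : (fun x => x + v x) '' sᶜ = sᶜ :=
      (image_congr fun x hx => by simp [hv0 x hx]).trans (image_id _)
    rw [← compl_inj_iff, ← image_compl_eq hbij, hcompl]
  have hderiv : ∀ x ∈ s, HasFDerivWithinAt (fun x => x + v x) (1 + fderiv ℝ v x) s x :=
    fun x hx => (hasFDerivWithinAt_id x s).add (hdiff x hx).hasFDerivAt.hasFDerivWithinAt
  have hpos : ∀ x, 0 < (1 + fderiv ℝ v x).det := fun x =>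
    det_one_add_pos_of_norm_lt_one ((norm_fderiv_le_of_lipschitz ℝ hv).trans_lt (mod_cast hK))
  calc ∫ x in s, (1 + fderiv ℝ v x).det ∂μ
      = ∫ x in s, |(1 + fderiv ℝ v x).det| • (1 : ℝ) ∂μ := by simp [abs_of_pos (hpos _)]
    _ = ∫ _ in (fun x => x + v x) '' s, (1 : ℝ) ∂μ :=
      (integral_image_eq_integral_abs_det_fderiv_smul μ hs hderiv hbij.injective.injOn
        fun _ => (1 : ℝ)).symm
    _ = μ.real s := by simp [himage]

theorem integral_det_one_add_fderiv_of_lipschitzWith {s : Set E} (hs : MeasurableSet s)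
    (hs' : μ s ≠ ⊤) {v : E → E} {K : ℝ≥0} (hv : LipschitzWith K v)
    (hdiff : ∀ x ∈ s, DifferentiableAt ℝ v x) (hv0 : ∀ x ∉ s, v x = 0) :
    ∫ x in s, (1 + fderiv ℝ v x).det ∂μ = μ.real s := by
  choose p hdeg hp using fun x =>
    exists_polynomial_eval_eq_det_one_add_smul (fderiv ℝ v x : E →ₗ[ℝ] E)
  have hp' : ∀ x t, (p x).eval t = (1 + t • fderiv ℝ v x).det := hp
  obtain ⟨q, hq⟩ := exists_polynomial_eval_eq_integral (μ := μ.restrict s) hdeg fun t => by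
    simpa only [hp', IntegrableOn] using integrableOn_det_one_add_smul_fderiv hs' hv t
  have hsmall : ∀ t : ℝ, ‖t‖₊ * K < 1 → q.eval t = (Polynomial.C (μ.real s)).eval t := by
    intro t ht
    rw [hq, Polynomial.eval_C, ← integral_det_one_add_fderiv_of_lipschitzWith_lt_one hs ht
      ((lipschitzWith_smul t).comp hv) (fun x hx => (hdiff x hx).const_smul t)
      fun x hx => by simp [hv0 x hx]]
    refine setIntegral_congr_fun hs fun x hx => ?_
    simp only [hp']
    exact congrArg (fun A : E →L[ℝ] E => (1 + A).det) (fderiv_const_smul (hdiff x hx) t).symm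
  have hnhds : {t : ℝ | ‖t‖₊ * K < 1} ∈ 𝓝 0 :=
    (isOpen_lt (by fun_prop) continuous_const).mem_nhds (by simp)
  have hconst : q = Polynomial.C (μ.real s) :=
    Polynomial.eq_of_infinite_eval_eq _ _ ((infinite_of_mem_nhds 0 hnhds).mono hsmall)
  simpa [hp', hconst] using (hq 1).symm

end Jacobian

section Retraction

variable {E : Type*} [NormedAddCommGroup E] [InnerProductSpace ℝ E]

lemma inner_fderiv_eq_zero_of_eventually_norm_eq {F : Type*} [NormedAddCommGroup F]
    [NormedSpace ℝ F] {r : F → E} {x : F} {c : ℝ}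
    (hdiff : DifferentiableAt ℝ r x) (hr : ∀ᶠ y in 𝓝 x, ‖r y‖ = c) (w : F) :
    ⟪r x, fderiv ℝ r x w⟫ = 0 := by
  have hconst : (fun y => ⟪r y, r y⟫) =ᶠ[𝓝 x] fun _ => c ^ 2 := by
    filter_upwards [hr] with y hy
    rw [real_inner_self_eq_norm_sq, hy]
  have hderiv := (hdiff.hasFDerivAt.inner ℝ hdiff.hasFDerivAt).unique
    ((hasFDerivAt_const (c ^ 2) x).congr_of_eventuallyEq hconst)
  simpa [real_inner_comm] using DFunLike.congr_fun hderiv w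

variable [FiniteDimensional ℝ E]

lemma det_fderiv_eq_zero_of_eventually_norm_eq {r : E → E} {x : E} {c : ℝ} (hc : c ≠ 0)
    (hdiff : DifferentiableAt ℝ r x) (hr : ∀ᶠ y in 𝓝 x, ‖r y‖ = c) : (fderiv ℝ r x).det = 0 := by
  by_contra hdet
  obtain ⟨w, hw⟩ : ∃ w, fderiv ℝ r x w = r x :=
    ((fderiv ℝ r x).toContinuousLinearEquivOfDetNeZero hdet).surjective (r x)
  have horth := inner_fderiv_eq_zero_of_eventually_norm_eq hdiff hr w
  rw [hw, real_inner_self_eq_norm_sq, hr.self_of_nhds] at horth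
  exact hc (pow_eq_zero_iff two_ne_zero |>.1 horth)

theorem not_mapsTo_sphere_of_lipschitzOnWith_of_eqOn_id {r : E → E} {K : ℝ≥0}
    (hr : LipschitzOnWith K r (closedBall 0 1)) (hdiff : DifferentiableOn ℝ r (ball 0 1))
    (hfix : EqOn r id (sphere 0 1)) : ¬ MapsTo r (ball 0 1) (sphere 0 1) := by
  intro hmaps
  borelize E
  let v : E → E := (ball 0 1).indicator fun x => r x - x
  have hv : LipschitzWith (K + 1) v := by
    refine lipschitzWith_indicator_of_eq_zero_on_frontier ?_ fun x hx => ?_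
    · rw [closure_ball _ one_ne_zero]
      exact hr.sub (LipschitzWith.id.lipschitzOnWith)
    · rw [frontier_ball _ one_ne_zero] at hx
      rw [hfix hx, id, sub_self]
  have hv_eq : ∀ x ∈ ball (0 : E) 1, v =ᶠ[𝓝 x] fun y => r y - y := fun x hx => by
    filter_upwards [isOpen_ball.mem_nhds hx] with y hy using indicator_of_mem hy _
  have hrdiff : ∀ x ∈ ball (0 : E) 1, DifferentiableAt ℝ r x := fun x hx =>
    hdiff.differentiableAt (isOpen_ball.mem_nhds hx)
  have hdet : ∀ x ∈ ball (0 : E) 1, (1 + fderiv ℝ v x).det = 0 := by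
    intro x hx
    have hfderiv : 1 + fderiv ℝ v x = fderiv ℝ r x := by
      rw [(hv_eq x hx).fderiv_eq, fderiv_fun_sub (hrdiff x hx) differentiableAt_fun_id,
        fderiv_fun_id]
      exact add_sub_cancel _ _
    rw [hfderiv]
    refine det_fderiv_eq_zero_of_eventually_norm_eq one_ne_zero (hrdiff x hx) ?_
    filter_upwards [isOpen_ball.mem_nhds hx] with y hy using
      mem_sphere_zero_iff_norm.1 (hmaps hy)
  have hvol := integral_det_one_add_fderiv_of_lipschitzWith (μ := volume) measurableSet_ball
    measure_ball_lt_top.ne hv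
    (fun x hx => ((hrdiff x hx).sub differentiableAt_id).congr_of_eventuallyEq (hv_eq x hx))
    fun x hx => indicator_of_notMem hx _
  rw [setIntegral_congr_fun measurableSet_ball hdet, integral_zero] at hvol
  exact (ENNReal.toReal_pos (measure_ball_pos volume (0 : E) one_pos).ne'
    measure_ball_lt_top.ne).ne hvol

end Retraction

section Zero

variable {E : Type*} [NormedAddCommGroup E] [InnerProductSpace ℝ E] [FiniteDimensional ℝ E]

lemma exists_contDiff_eq_id_on_sphere_of_inner_pos {G : E → E}
    (hG : ContinuousOn G (closedBall 0 1)) (hne : ∀ x ∈ closedBall 0 1, G x ≠ 0)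
    (hpos : ∀ x ∈ sphere 0 1, 0 < ⟪G x, x⟫) :
    ∃ h : E → E, ContDiff ℝ 1 h ∧ (∀ x ∈ sphere 0 1, h x = x) ∧
      ∀ x ∈ closedBall 0 1, 0 < ⟪G x, h x⟫ := by
  -- We look for `h x = x + (1 - ‖x‖²) • w x`, which is the identity on the sphere whatever `w` is;
  -- the remaining condition on `w x` is convex, so a partition of unity makes `w` smooth.
  let t : E → Set E := fun x => {y | x ∈ closedBall 0 1 → 0 < ⟪G x, x + (1 - ‖x‖ ^ 2) • y⟫}
  have ht : ∀ x, Convex ℝ (t x) := by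
    intro x y hy z hz a b ha hb hab hx
    have hcomb : ⟪G x, x + (1 - ‖x‖ ^ 2) • (a • y + b • z)⟫
        = a * ⟪G x, x + (1 - ‖x‖ ^ 2) • y⟫ + b * ⟪G x, x + (1 - ‖x‖ ^ 2) • z⟫ := by
      obtain rfl : b = 1 - a := by linarith
      simp only [inner_add_right, inner_smul_right]
      ring
    rw [hcomb]
    exact (convex_Ioi (0 : ℝ)) (hy hx) (hz hx) ha hb hab
  have hloc : ∀ x, ∃ c, ∀ᶠ y in 𝓝 x, c ∈ t y := by
    intro x
    by_cases hx : x ∈ closedBall 0 1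
    · obtain ⟨c, hc⟩ : ∃ c, 0 < ⟪G x, x + (1 - ‖x‖ ^ 2) • c⟫ := by
        rcases (mem_closedBall_zero_iff.1 hx).eq_or_lt with hx1 | hx1
        · exact ⟨0, by simpa using hpos x (mem_sphere_zero_iff_norm.2 hx1)⟩
        · refine ⟨(1 - ‖x‖ ^ 2)⁻¹ • (G x - x), ?_⟩
          have : 1 - ‖x‖ ^ 2 ≠ 0 := by nlinarith [norm_nonneg x]
          rw [smul_inv_smul₀ this, add_sub_cancel, real_inner_self_eq_norm_sq]
          exact pow_pos (norm_pos_iff.2 (hne x hx)) 2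
      have hcont : ContinuousOn (fun y => ⟪G y, y + (1 - ‖y‖ ^ 2) • c⟫) (closedBall 0 1) :=
        hG.inner (by fun_prop)
      exact ⟨c, eventually_nhdsWithin_iff.1 ((hcont x hx).eventually_const_lt hc)⟩
    · refine ⟨0, ?_⟩
      filter_upwards [isClosed_closedBall.isOpen_compl.mem_nhds hx] with y hy hy'
      exact absurd hy' hy
  obtain ⟨w, hw⟩ := exists_contMDiffMap_forall_mem_convex_of_local_const (n := 1) 𝓘(ℝ, E) ht hloc
  have hw' : ContDiff ℝ 1 w := contMDiff_iff_contDiff.1 w.contMDiff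
  refine ⟨fun x => x + (1 - ‖x‖ ^ 2) • w x, ?_, fun x hx => ?_, hw⟩
  · exact contDiff_id.add ((contDiff_const.sub (contDiff_norm_sq ℝ)).smul hw')
  · simp [mem_sphere_zero_iff_norm.1 hx]

theorem exists_mem_closedBall_eq_zero_of_inner_pos {G : E → E}
    (hG : ContinuousOn G (closedBall 0 1)) (hpos : ∀ x ∈ sphere 0 1, 0 < ⟪G x, x⟫) :
    ∃ x ∈ closedBall 0 1, G x = 0 := by
  by_contra! hne
  obtain ⟨h, hh, hfix, hinner⟩ := exists_contDiff_eq_id_on_sphere_of_inner_pos hG hne hpos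
  have hh0 : ∀ x ∈ closedBall 0 1, h x ≠ 0 := fun x hx h0 => by simpa [h0] using hinner x hx
  let r : E → E := fun x => ‖h x‖⁻¹ • h x
  have hr : ContDiffOn ℝ 1 r (closedBall 0 1) :=
    ((hh.contDiffOn.norm ℝ hh0).inv fun x hx => norm_ne_zero_iff.2 (hh0 x hx)).smul hh.contDiffOn
  obtain ⟨K, hK⟩ := hr.exists_lipschitzOnWith one_ne_zero (convex_closedBall 0 1)
    (isCompact_closedBall 0 1)
  refine not_mapsTo_sphere_of_lipschitzOnWith_of_eqOn_id hK
    ((hr.differentiableOn one_ne_zero).mono ball_subset_closedBall) (fun x hx => ?_) fun x hx => ?_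
  · simp [r, hfix x hx, mem_sphere_zero_iff_norm.1 hx]
  · simpa using norm_smul_inv_norm (𝕜 := ℝ) (hh0 x (ball_subset_closedBall hx))

end Zero

section LeftInvertible

lemma stableRank_eq_of_dense_iff {A : Type*} [Ring A] [TopologicalSpace A] {m : ℕ}
    (h : ∀ n, Dense (lgSet A n) ↔ m ≤ n) : stableRank A = m := by
  refine IsLeast.csInf_eq ⟨⟨m, rfl, (h m).2 le_rfl⟩, ?_⟩
  rintro _ ⟨n, rfl, hn⟩
  exact mod_cast (h n).1 hn

variable {X : Type*} [TopologicalSpace X] {n : ℕ}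

open scoped ComplexOrder in
lemma mem_lgSet_continuousMap_iff {𝕜 : Type*} [RCLike 𝕜] {g : Fin n → C(X, 𝕜)} :
    g ∈ lgSet C(X, 𝕜) n ↔ ∀ x, ∃ i, g i x ≠ 0 := by
  constructor
  · rintro ⟨y, hy⟩ x
    by_contra! hzero
    simpa [hzero] using DFunLike.congr_fun hy x
  · intro hne
    have hunit : IsUnit (∑ i, star (g i) * g i) := by
      refine (ContinuousMap.isUnit_iff_forall_ne_zero _).2 fun x hx => ?_
      obtain ⟨i, hi⟩ := hne x
      have hdot : star (fun j => g j x) ⬝ᵥ (fun j => g j x) = 0 := by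
        simpa [dotProduct] using hx
      exact hi (congrFun (dotProduct_star_self_eq_zero.1 hdot) i)
    obtain ⟨u, hu⟩ := hunit
    refine ⟨fun i => ↑u⁻¹ * star (g i), ?_⟩
    simp_rw [mul_assoc, ← Finset.mul_sum, ← hu, Units.inv_mul]

lemma mem_closure_lgSet_of_dense_compl_range {𝕜 : Type*} [RCLike 𝕜] {g : Fin n → C(X, 𝕜)}
    (hg : Dense (range fun x i => g i x)ᶜ) : g ∈ closure (lgSet C(X, 𝕜) n) := by
  let translate : (Fin n → 𝕜) → Fin n → C(X, 𝕜) := fun c i => g i - ContinuousMap.const X (c i)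
  have hcont : Continuous translate := continuous_pi fun i =>
    continuous_const.sub (ContinuousMap.continuous_const'.comp (continuous_apply i))
  have hzero : translate 0 = g := by
    ext i x
    simp [translate]
  rw [← hzero]
  refine map_mem_closure hcont (hg 0) fun c hc => mem_lgSet_continuousMap_iff.2 fun x => ?_
  obtain ⟨i, hi⟩ := Function.ne_iff.1 fun h : (fun i => g i x) = c => hc ⟨x, h⟩
  exact ⟨i, sub_ne_zero.2 hi⟩

lemma not_dense_lgSet_of_inner_pos {f : Fin n → C(X, ℂ)} (φ : C(EuclideanSpace ℂ (Fin n), X))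
    (hf : ∀ z ∈ sphere 0 1, 0 < ⟪WithLp.toLp 2 fun k => f k (φ z), z⟫) :
    ¬ Dense (lgSet C(X, ℂ) n) := by
  intro hdense
  let pullback : (Fin n → C(X, ℂ)) → EuclideanSpace ℂ (Fin n) → EuclideanSpace ℂ (Fin n) :=
    fun g z => WithLp.toLp 2 fun k => g k (φ z)
  have hcont : Continuous fun p : (Fin n → C(X, ℂ)) × EuclideanSpace ℂ (Fin n) =>
      pullback p.1 p.2 := by
    refine (PiLp.continuous_toLp 2 _).comp (continuous_pi fun k => ?_)
    have hcomp : Continuous fun g : Fin n → C(X, ℂ) => (g k).comp φ :=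
      (ContinuousMap.continuous_precomp φ).comp (continuous_apply k)
    exact ContinuousEval.continuous_eval.comp (hcomp.prodMap continuous_id)
  have hopen : ∀ᶠ g in 𝓝 f, ∀ z ∈ sphere 0 1, 0 < ⟪pullback g z, z⟫ :=
    (isCompact_sphere 0 1).eventually_forall_of_forall_eventually fun z hz =>
      (hcont.inner continuous_snd).continuousAt.eventually_const_lt (hf z hz)
  obtain ⟨g, hg, hpos⟩ := hdense.inter_nhds_nonempty hopen
  obtain ⟨z, -, hz⟩ := exists_mem_closedBall_eq_zero_of_inner_pos
    (hcont.comp (Continuous.prodMk_right g)).continuousOn hpos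
  obtain ⟨k, hk⟩ := mem_lgSet_continuousMap_iff.1 hg (φ z)
  exact hk (congrArg (fun w : EuclideanSpace ℂ (Fin n) => w k) hz)

end LeftInvertible

section Torus

variable {d : Type*}

/-- The function `θ ↦ sin (2πθ)` on `ℝ/ℤ`, read off the first Fourier monomial. -/
noncomputable def unitAddCircleSin : C(UnitAddCircle, ℝ) :=
  ⟨fun θ => (fourier 1 θ : ℂ).im, by fun_prop⟩

lemma unitAddCircleSin_coe (x : ℝ) : unitAddCircleSin x = Real.sin (2 * Real.pi * x) := by
  have hexp : (fourier 1 (x : UnitAddCircle) : ℂ) =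
      Complex.exp ((2 * Real.pi * x : ℝ) * Complex.I) := by
    rw [fourier_coe_apply]
    congr 1
    push_cast
    ring
  simp only [unitAddCircleSin, ContinuousMap.coe_mk, hexp, Complex.exp_ofReal_mul_I_im]

lemma sq_le_mul_unitAddCircleSin_div_four {y : ℝ} (hy : |y| ≤ 1) :
    y ^ 2 ≤ y * unitAddCircleSin ↑(y / 4) := by
  have hsin : ∀ z : ℝ, 0 ≤ z → z ≤ 1 → z ≤ Real.sin (2 * Real.pi * (z / 4)) := by
    intro z hz0 hz1
    calc z = 2 / Real.pi * (2 * Real.pi * (z / 4)) := by field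
      _ ≤ Real.sin (2 * Real.pi * (z / 4)) :=
        Real.mul_le_sin (by positivity) (by nlinarith [Real.pi_pos])
  rw [unitAddCircleSin_coe, sq]
  obtain ⟨hy1, hy2⟩ := abs_le.1 hy
  rcases le_total 0 y with h0 | h0
  · exact mul_le_mul_of_nonneg_left (hsin y h0 hy2) h0
  · refine mul_le_mul_of_nonpos_left ?_ h0
    have hneg := hsin (-y) (by linarith) (by linarith)
    rw [neg_div, mul_neg, Real.sin_neg] at hneg
    linarith

/-- The map `ℂⁿ → 𝕋^d` sending the real and imaginary parts of the coordinates, divided by `4`,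
to the angles selected by `e`; the remaining angles are `0`. -/
noncomputable def torusChart {n : ℕ} (e : Fin n ⊕ Fin n → d) :
    C(EuclideanSpace ℂ (Fin n), UnitAddTorus d) where
  toFun z j := ↑(Function.extend e (Sum.elim (fun k => (z k).re) fun k => (z k).im) 0 j / 4)
  continuous_toFun := by
    have hextend := (Function.ExtendByZero.linearMap ℝ e).continuous_of_finiteDimensional
    have hparts : Continuous fun z : EuclideanSpace ℂ (Fin n) =>
        Sum.elim (fun k => (z k).re) fun k => (z k).im := by
      refine continuous_pi fun p => ?_
      rcases p with k | k
      · exact Complex.continuous_re.comp (PiLp.continuous_apply 2 _ k)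
      · exact Complex.continuous_im.comp (PiLp.continuous_apply 2 _ k)
    exact continuous_pi fun j => (AddCircle.continuous_mk' 1).comp
      (((continuous_apply j).comp (hextend.comp hparts)).div_const 4)

variable [Fintype d]

lemma dense_contDiff_lift_unitAddTorus (r : WithTop ℕ∞) :
    Dense {g : C(UnitAddTorus d, ℂ) | ContDiff ℝ r fun x : d → ℝ => g fun i => x i} := by
  let S : Submodule ℂ C(UnitAddTorus d, ℂ) :=
    { carrier := {g | ContDiff ℝ r fun x : d → ℝ => g fun i => x i}
      add_mem' := fun {f g} hf hg => ContDiff.add (𝕜 := ℝ) (n := r) hf hg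
      zero_mem' := contDiff_const
      smul_mem' := fun c _ hg => ContDiff.const_smul (𝕜 := ℝ) (n := r) c hg }
  have hle : Submodule.span ℂ (range (UnitAddTorus.mFourier (d := d))) ≤ S := by
    refine Submodule.span_le.2 (range_subset_iff.2 fun m => ?_)
    have hlift : ContDiff ℝ r fun x : d → ℝ => UnitAddTorus.mFourier m fun i => x i := by
      simp only [UnitAddTorus.mFourier, ContinuousMap.coe_mk, fourier_coe_apply]
      have hofReal : ContDiff ℝ r ((↑) : ℝ → ℂ) := Complex.ofRealCLM.contDiff
      exact contDiff_prod fun i _ => by fun_prop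
    exact hlift
  exact (Submodule.dense_iff_topologicalClosure_eq_top.2
    UnitAddTorus.span_mFourier_closure_eq_top).mono hle

lemma dense_lgSet_unitAddTorus {n : ℕ} (h : Fintype.card d < 2 * n) :
    Dense (lgSet C(UnitAddTorus d, ℂ) n) := by
  have hdense : Dense {g : Fin n → C(UnitAddTorus d, ℂ) |
      ∀ k, ContDiff ℝ 1 fun x : d → ℝ => g k fun i => x i} := by
    simpa [Set.pi] using
      dense_pi univ fun (_ : Fin n) _ => dense_contDiff_lift_unitAddTorus (d := d) 1
  refine dense_closure.1 (hdense.mono fun g hg => mem_closure_lgSet_of_dense_compl_range ?_)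
  let lift : (d → ℝ) → Fin n → ℂ := fun x k => g k fun i => x i
  have hsurj : Function.Surjective fun (x : d → ℝ) (i : d) => (x i : UnitAddCircle) :=
    Function.Surjective.piMap fun _ => QuotientAddGroup.mk_surjective
  have hrange : (range fun θ k => g k θ) = range lift := (hsurj.range_comp _).symm
  rw [hrange]
  refine ContDiff.dense_compl_range_of_finrank_lt_finrank (contDiff_pi.2 hg) ?_
  simpa [finrank_pi_fintype, mul_comm] using h

lemma not_dense_lgSet_unitAddTorus {n : ℕ} (h : 2 * n ≤ Fintype.card d) :
    ¬ Dense (lgSet C(UnitAddTorus d, ℂ) n) := by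
  obtain ⟨e⟩ : Nonempty (Fin n ⊕ Fin n ↪ d) :=
    Function.Embedding.nonempty_of_card_le (by simpa [← two_mul] using h)
  let f : Fin n → C(UnitAddTorus d, ℂ) := fun k =>
    ⟨fun θ => unitAddCircleSin (θ (e (.inl k))) + unitAddCircleSin (θ (e (.inr k))) * Complex.I,
      by fun_prop⟩
  refine not_dense_lgSet_of_inner_pos (f := f) (torusChart e) fun z hz => ?_
  have hz1 : ‖z‖ = 1 := mem_sphere_zero_iff_norm.1 hz
  have hz2 : ∀ k, ‖z k‖ ≤ 1 := fun k => hz1 ▸ PiLp.norm_apply_le z k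
  calc 0 < ‖z‖ ^ 2 := by simp [hz1]
    _ = ∑ k, ((z k).re ^ 2 + (z k).im ^ 2) := by
      simp_rw [EuclideanSpace.norm_sq_eq, Complex.sq_norm, Complex.normSq_apply, sq]
    _ ≤ ∑ k, ((z k).re * unitAddCircleSin ↑((z k).re / 4)
          + (z k).im * unitAddCircleSin ↑((z k).im / 4)) := by
      gcongr with k
      · exact sq_le_mul_unitAddCircleSin_div_four ((Complex.abs_re_le_norm _).trans (hz2 k))
      · exact sq_le_mul_unitAddCircleSin_div_four ((Complex.abs_im_le_norm _).trans (hz2 k))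
    _ = ⟪WithLp.toLp 2 fun k => f k (torusChart e z), z⟫ := by
      simp [PiLp.inner_apply, Complex.inner, f, torusChart, e.injective.extend_apply, mul_comm]

theorem dense_lgSet_unitAddTorus_iff {n : ℕ} :
    Dense (lgSet C(UnitAddTorus d, ℂ) n) ↔ Fintype.card d < 2 * n :=
  ⟨fun hdense => not_le.1 fun hle => not_dense_lgSet_unitAddTorus hle hdense,
    dense_lgSet_unitAddTorus⟩

end Torus

/-- The stable rank of `C(𝕋^ℓ)` is `⌊ℓ/2⌋ + 1`. -/
theorem stableRank_continuousFunctions_torus (ℓ : ℕ) :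
    stableRank C(Fin ℓ → AddCircle (1 : ℝ), ℂ) = ((ℓ / 2 + 1 : ℕ) : ℕ∞) := by
  refine stableRank_eq_of_dense_iff fun n => dense_lgSet_unitAddTorus_iff.trans ?_
  rw [Fintype.card_fin]
  omega
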